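/- Let D ≥ 0 be an integer and assume the induction hypothesis H(D): for every m ≥ 1 and all natural numbers p_1, …, p_m, q_1, …, q_m with Σ_k (p_k + q_k) ≤ D, the product Π_{k=1}^m tr(A^{p_k} B^{q_k}) agrees at every point of Ŝ_n with some element of Lie(ℱ). Then for all natural numbers p, q, m and all integers i_1, …, i_m ≥ 2 with p + q + Σ_k i_k ≤ D + 4, the product tr(A^p B^q) · Π_{k=1}^m tr(A^{i_k}) agrees at every point of Ŝ_n with some element of Lie(ℱ). -/

import Mathlib

open MvPolynomial Matrix

/-- Polynomial functions on `M_n(ℂ) × M_n(ℂ)`, represented as polynomials in the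
entries of the two matrices. -/
abbrev PolyFun (n : ℕ) := MvPolynomial ((Fin n × Fin n) ⊕ (Fin n × Fin n)) ℂ

/-- The matrix of coordinate functions `X_{jk}`. -/
noncomputable def Xmat (n : ℕ) : Matrix (Fin n) (Fin n) (PolyFun n) :=
  fun i j => MvPolynomial.X (Sum.inl (i, j))

/-- The matrix of coordinate functions `Y_{jk}`. -/
noncomputable def Ymat (n : ℕ) : Matrix (Fin n) (Fin n) (PolyFun n) :=
  fun i j => MvPolynomial.X (Sum.inr (i, j))

/-- Traceless part `A = X - (tr X / n) I_n`. -/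
noncomputable def Amat (n : ℕ) : Matrix (Fin n) (Fin n) (PolyFun n) :=
  Xmat n - (MvPolynomial.C ((n : ℂ)⁻¹) * Matrix.trace (Xmat n)) • (1 : Matrix (Fin n) (Fin n) (PolyFun n))

/-- Traceless part `B = Y - (tr Y / n) I_n`. -/
noncomputable def Bmat (n : ℕ) : Matrix (Fin n) (Fin n) (PolyFun n) :=
  Ymat n - (MvPolynomial.C ((n : ℂ)⁻¹) * Matrix.trace (Ymat n)) • (1 : Matrix (Fin n) (Fin n) (PolyFun n))

/-- The polynomial function `(X,Y) ↦ tr (A^p B^q)`. -/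
noncomputable def trAB (n p q : ℕ) : PolyFun n :=
  Matrix.trace (Amat n ^ p * Bmat n ^ q)

/-- The polynomial function `(X,Y) ↦ tr (X^a Y^b)`. -/
noncomputable def trXY (n a b : ℕ) : PolyFun n :=
  Matrix.trace (Xmat n ^ a * Ymat n ^ b)

/-- The Poisson bracket
`{F,G} = Σ_{j,k} ∂F/∂X_{jk} ∂G/∂Y_{kj} − ∂F/∂Y_{jk} ∂G/∂X_{kj}`. -/
noncomputable def pbracket {n : ℕ} (F G : PolyFun n) : PolyFun n :=
  ∑ j : Fin n, ∑ k : Fin n,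
    (MvPolynomial.pderiv (Sum.inl (j, k)) F * MvPolynomial.pderiv (Sum.inr (k, j)) G
      - MvPolynomial.pderiv (Sum.inr (j, k)) F * MvPolynomial.pderiv (Sum.inl (k, j)) G)

/-- Evaluation of a polynomial function at a pair of matrices. -/
noncomputable def evalP {n : ℕ} (X Y : Matrix (Fin n) (Fin n) ℂ) (F : PolyFun n) : ℂ :=
  MvPolynomial.eval (Sum.elim (fun p => X p.1 p.2) (fun p => Y p.1 p.2)) F

/-- The Calogero–Moser variety `Ĉ_n = {(X,Y) : rank([X,Y] − i I_n) = 1}`. -/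
def Chat (n : ℕ) : Set (Matrix (Fin n) (Fin n) ℂ × Matrix (Fin n) (Fin n) ℂ) :=
  {P | ((P.1 * P.2 - P.2 * P.1) - Complex.I • (1 : Matrix (Fin n) (Fin n) ℂ)).rank = 1}

/-- The traceless Calogero–Moser variety
`Ŝ_n = {(X,Y) : tr X = tr Y = 0, rank([X,Y] − i I_n) = 1}`. -/
def Shat (n : ℕ) : Set (Matrix (Fin n) (Fin n) ℂ × Matrix (Fin n) (Fin n) ℂ) :=
  {P | Matrix.trace P.1 = 0 ∧ Matrix.trace P.2 = 0 ∧
    ((P.1 * P.2 - P.2 * P.1) - Complex.I • (1 : Matrix (Fin n) (Fin n) ℂ)).rank = 1}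

/-- The set `ℱ = {tr A², tr B², tr A³, (tr AB)²}`. -/
noncomputable def calF (n : ℕ) : Set (PolyFun n) :=
  {trAB n 2 0, trAB n 0 2, trAB n 3 0, (trAB n 1 1) ^ 2}

/-- The smallest ℂ-linear subspace of the polynomial functions containing `S`
and closed under the Poisson bracket. -/
inductive LieGen (n : ℕ) (S : Set (PolyFun n)) : PolyFun n → Prop
  | base {f : PolyFun n} : f ∈ S → LieGen n S f
  | zero : LieGen n S 0
  | add {f g : PolyFun n} : LieGen n S f → LieGen n S g → LieGen n S (f + g)
  | smul (c : ℂ) {f : PolyFun n} : LieGen n S f → LieGen n S (c • f)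
  | bracket {f g : PolyFun n} : LieGen n S f → LieGen n S g → LieGen n S (pbracket f g)

section TraceSpan

variable {K ι : Type*} [CommRing K] [Fintype ι] [DecidableEq ι]

/-- The matrix word with letters `A` (for `true`) and `B` (for `false`). -/
def matrixWord (A B : Matrix ι ι K) (w : List Bool) : Matrix ι ι K :=
  (w.map fun b => cond b A B).prod

variable {A B : Matrix ι ι K}

theorem matrixWord_append (w w' : List Bool) :
    matrixWord A B (w ++ w') = matrixWord A B w * matrixWord A B w' := by
  simp [matrixWord]

theorem matrixWord_cons (b : Bool) (w : List Bool) :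
    matrixWord A B (b :: w) = cond b A B * matrixWord A B w := by
  simp [matrixWord]

theorem matrixWord_replicate_true (p : ℕ) : matrixWord A B (List.replicate p true) = A ^ p := by
  simp [matrixWord]

theorem matrixWord_replicate_false (p : ℕ) : matrixWord A B (List.replicate p false) = B ^ p := by
  simp [matrixWord]

variable [Algebra ℂ K]

/-- The span of the products of traces `tr (A^p B^q)` of total degree at most `e`. -/
def traceSpan (A B : Matrix ι ι K) (e : ℤ) : Submodule ℂ K :=
  Submodule.span ℂ {f | ∃ l : List (ℕ × ℕ), (((l.map fun x => x.1 + x.2).sum : ℕ) : ℤ) ≤ e ∧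
    f = (l.map fun x => trace (A ^ x.1 * B ^ x.2)).prod}

theorem traceSpan_mono {e e' : ℤ} (h : e ≤ e') : traceSpan A B e ≤ traceSpan A B e' :=
  Submodule.span_mono fun _ ⟨l, hl, hf⟩ => ⟨l, hl.trans h, hf⟩

theorem trace_pow_mul_pow_mem_traceSpan {p q : ℕ} {e : ℤ} (h : (p : ℤ) + q ≤ e) :
    trace (A ^ p * B ^ q) ∈ traceSpan A B e :=
  Submodule.subset_span ⟨[(p, q)], by simpa using h, by simp⟩

theorem mul_mem_traceSpan {e e' : ℤ} {f g : K} (hf : f ∈ traceSpan A B e)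
    (hg : g ∈ traceSpan A B e') : f * g ∈ traceSpan A B (e + e') := by
  have hfg := Submodule.mul_mem_mul hf hg
  rw [traceSpan, traceSpan, Submodule.span_mul_span] at hfg
  refine Submodule.span_mono ?_ hfg
  rintro _ ⟨_, ⟨l, hl, rfl⟩, _, ⟨l', hl', rfl⟩, rfl⟩
  refine ⟨l ++ l', ?_, by simp⟩
  rw [List.map_append, List.sum_append]
  push_cast at *
  linarith

theorem List.Perm.replicate_append_replicate_count (w : List Bool) :
    w.Perm (List.replicate (w.count true) true ++ List.replicate (w.count false) false) := by
  rw [List.perm_iff_count]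
  rintro (_ | _) <;> simp [List.count_replicate]

/-- A function on words that changes by elements of `T` under adjacent transpositions of distinct
letters changes by elements of `T` under all permutations. -/
theorem List.Perm.sub_mem_of_swap {T : Submodule ℂ K} {d : ℕ} {F : List Bool → K}
    (hF : ∀ l l' : List Bool, l.length + l'.length + 2 = d →
      F (l ++ true :: false :: l') - F (l ++ false :: true :: l') ∈ T)
    {w w' : List Bool} (h : w.Perm w') :
    ∀ l : List Bool, l.length + w.length = d → F (l ++ w) - F (l ++ w') ∈ T := by
  induction h with
  | nil => intro l _; simp
  | cons x h ih =>
    intro l hl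
    simpa using ih (l ++ [x]) (by simp at hl ⊢; omega)
  | swap x y l' =>
    intro l hl
    have hl' : l.length + l'.length + 2 = d := by simp at hl; omega
    rcases x with _ | _ <;> rcases y with _ | _
    · simp
    · exact hF l l' hl'
    · simpa using neg_mem (hF l l' hl')
    · simp
  | trans h₁ h₂ ih₁ ih₂ =>
    intro l hl
    simpa using add_mem (ih₁ l hl) (ih₂ l (by rw [← h₁.length_eq]; exact hl))

/-- If `[A, B] - i` behaves like a matrix of rank one, then permuting the letters of a word of
length `d` changes its trace by products of traces of total degree at most `d - 4`. -/
theorem trace_matrixWord_sub_mem {M : Matrix ι ι K}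
    (hM : A * B - B * A = M + Complex.I • (1 : Matrix ι ι K))
    (hrank : ∀ U V : Matrix ι ι K,
      trace (U * M) * trace (V * M) = trace (U * M * V * M))
    {w w' : List Bool} (hw : w.Perm w') :
    trace (matrixWord A B w) - trace (matrixWord A B w') ∈ traceSpan A B (w.length - 4) := by
  have hswap (U V : Matrix ι ι K) : U * (A * (B * V)) - U * (B * (A * V)) =
      U * M * V + Complex.I • (U * V) := by
    have : U * (A * B - B * A) * V = U * (M + Complex.I • (1 : Matrix ι ι K)) * V := by rw [hM]
    simpa [mul_add, add_mul, mul_sub, sub_mul, mul_assoc] using this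
  suffices key : ∀ (d : ℕ) (w : List Bool), w.length = d →
      trace (matrixWord A B w) ∈ traceSpan A B d ∧
      trace (matrixWord A B w * M) + Complex.I • trace (matrixWord A B w) ∈
        traceSpan A B (d - 2) by
    simpa using hw.sub_mem_of_swap (F := fun w => trace (matrixWord A B w))
      (fun l l' hl => by
        have := (key (l' ++ l).length (l' ++ l) rfl).2
        rw [← trace_sub]
        simp only [matrixWord_append, matrixWord_cons, cond_true, cond_false] at this ⊢
        rw [hswap, trace_add, trace_smul, trace_mul_cycle, trace_mul_comm (matrixWord A B l)]
        exact traceSpan_mono (by simp; omega) this) [] (d := w.length) (by simp)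
  intro d
  induction d using Nat.strong_induction_on with
  | _ d ih =>
  have hphi : ∀ w : List Bool, w.length < d →
      trace (matrixWord A B w * M) ∈ traceSpan A B w.length := by
    intro w hw
    obtain ⟨h₁, h₂⟩ := ih _ hw w rfl
    simpa using sub_mem (traceSpan_mono (by omega) h₂)
      (Submodule.smul_mem _ Complex.I h₁)
  have htr : ∀ w w' : List Bool, w.Perm w' → w.length = d →
      trace (matrixWord A B w) - trace (matrixWord A B w') ∈ traceSpan A B (d - 4) := by
    intro w w' hww' hw
    simpa using hww'.sub_mem_of_swap (F := fun w => trace (matrixWord A B w))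
      (fun l l' hl => by
        have := (ih (l' ++ l).length (by simp; omega) (l' ++ l) rfl).2
        rw [← trace_sub]
        simp only [matrixWord_append, matrixWord_cons, cond_true, cond_false] at this ⊢
        rw [hswap, trace_add, trace_smul, trace_mul_cycle, trace_mul_comm (matrixWord A B l)]
        exact traceSpan_mono (by simp; omega) this) [] (d := d) (by simpa using hw)
  have hphi_perm : ∀ w w' : List Bool, w.Perm w' → w.length = d →
      trace (matrixWord A B w * M) - trace (matrixWord A B w' * M) ∈ traceSpan A B (d - 2) := by
    intro w w' hww' hw
    simpa using hww'.sub_mem_of_swap (F := fun w => trace (matrixWord A B w * M))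
      (fun l l' hl => by
        have h₁ := hphi (l ++ l') (by simp; omega)
        have h₂ := mul_mem_traceSpan (hphi l (by omega)) (hphi l' (by omega))
        rw [hrank] at h₂
        rw [← trace_sub, ← sub_mul]
        simp only [matrixWord_append, matrixWord_cons, cond_true, cond_false] at h₁ ⊢
        rw [hswap, add_mul, trace_add, smul_mul_assoc, trace_smul]
        exact add_mem (traceSpan_mono (by omega) h₂)
          (Submodule.smul_mem _ _ (traceSpan_mono (by simp; omega) h₁))) []
        (d := d) (by simpa using hw)
  intro w hw
  set p := w.count true
  set q := w.count false
  have hpq : p + q = d := by rw [← hw]; exact List.count_true_add_count_false w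
  have hperm := List.Perm.replicate_append_replicate_count w
  have hword : matrixWord A B (List.replicate p true ++ List.replicate q false) =
      A ^ p * B ^ q := by
    rw [matrixWord_append, matrixWord_replicate_true, matrixWord_replicate_false]
  have htrw := htr _ _ hperm hw
  have hphiw := hphi_perm _ _ hperm hw
  rw [hword] at htrw hphiw
  have htrm : trace (A ^ p * B ^ q) ∈ traceSpan A B d :=
    trace_pow_mul_pow_mem_traceSpan (by omega)
  have htr_mem : trace (matrixWord A B w) ∈ traceSpan A B d := by
    simpa using add_mem (traceSpan_mono (by omega) htrw) htrm
  refine ⟨htr_mem, ?_⟩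
  suffices hsorted : trace (A ^ p * B ^ q * M) + Complex.I • trace (A ^ p * B ^ q) ∈
      traceSpan A B (d - 2) by
    have := add_mem (add_mem hsorted hphiw)
      (Submodule.smul_mem _ Complex.I (traceSpan_mono (by omega : (d : ℤ) - 4 ≤ d - 2) htrw))
    convert this using 1
    rw [smul_sub]; ring
  have htel : ∀ j ≤ q, trace (A ^ p * B ^ j * A * B ^ (q + 1 - j)) -
      trace (A ^ (p + 1) * B ^ (q + 1)) +
      (j : ℂ) • (trace (A ^ p * B ^ q * M) + Complex.I • trace (A ^ p * B ^ q)) ∈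
        traceSpan A B (d - 2) := by
    intro j hj
    induction j with
    | zero => simp [pow_succ, mul_assoc]
    | succ j ihj =>
      have h₁ := ihj (by omega)
      have h₂ := hphi_perm (List.replicate (q - j) false ++
        (List.replicate p true ++ List.replicate j false))
        (List.replicate p true ++ List.replicate q false) (by
          rw [List.perm_iff_count]
          rintro (_ | _) <;> simp [List.count_replicate]; omega) (by simp; omega)
      rw [hword] at h₂
      simp only [matrixWord_append, matrixWord_replicate_true, matrixWord_replicate_false] at h₂
      have h₃ := congrArg trace (hswap (A ^ p * B ^ j) (B ^ (q - j)))
      have e₁ : q + 1 - j = (q - j) + 1 := by omega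
      have e₂ : q + 1 - (j + 1) = q - j := by omega
      rw [trace_sub, trace_add, trace_smul, trace_mul_cycle (A ^ p * B ^ j),
        mul_assoc (A ^ p) (B ^ j) (B ^ (q - j)), ← pow_add,
        Nat.add_sub_cancel' (by omega : j ≤ q)] at h₃
      convert sub_mem h₁ h₂ using 1
      rw [e₁, e₂]
      have e₃ : A ^ p * B ^ j * A * B ^ (q - j + 1) = A ^ p * B ^ j * (A * (B * B ^ (q - j))) := by
        rw [pow_succ']; simp only [mul_assoc]
      have e₄ : A ^ p * B ^ (j + 1) * A * B ^ (q - j) =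
          A ^ p * B ^ j * (B * (A * B ^ (q - j))) := by
        rw [pow_succ]; simp only [mul_assoc]
      rw [e₃, e₄]
      push_cast
      rw [add_smul, one_smul]
      linear_combination -h₃
  have h := htel q le_rfl
  have hM' : trace (A ^ p * B ^ q * M) + Complex.I • trace (A ^ p * B ^ q) =
      trace (A ^ p * B ^ q * A * B ^ (q + 1 - q)) - trace (A ^ (p + 1) * B ^ (q + 1)) := by
    have h₃ := congrArg trace (hswap (A ^ p * B ^ q) 1)
    rw [trace_sub, trace_add, trace_smul] at h₃
    have e : trace (A ^ (p + 1) * B ^ (q + 1)) = trace (A ^ p * B ^ q * (B * A)) := by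
      rw [pow_succ', pow_succ, mul_assoc, trace_mul_comm]; simp only [mul_assoc]
    rw [e]
    simpa [mul_assoc] using h₃.symm
  have hq : (q : ℂ) + 1 ≠ 0 := by exact_mod_cast Nat.succ_ne_zero q
  refine (Submodule.smul_mem_iff _ hq).1 ?_
  rw [← hM'] at h
  rwa [add_smul, one_smul, add_comm]

end TraceSpan

section Bracket

variable {n : ℕ}

/-- The traceless part of a matrix of polynomial functions. -/
noncomputable def tracelessPart (P : Matrix (Fin n) (Fin n) (PolyFun n)) :
    Matrix (Fin n) (Fin n) (PolyFun n) :=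
  P - (C ((n : ℂ)⁻¹) * trace P) • (1 : Matrix (Fin n) (Fin n) (PolyFun n))

theorem trace_tracelessPart (hn : n ≠ 0) (P : Matrix (Fin n) (Fin n) (PolyFun n)) :
    trace (tracelessPart P) = 0 := by
  have h : (C ((n : ℂ)⁻¹) : PolyFun n) * n = 1 := by
    rw [← map_natCast (C : ℂ →+* PolyFun n), ← C_mul, inv_mul_cancel₀ (by exact_mod_cast hn), C_1]
  simp only [tracelessPart, trace_sub, trace_smul, trace_one, Fintype.card_fin, smul_eq_mul]
  linear_combination (-trace P) * h

theorem tracelessPart_eq_self {P : Matrix (Fin n) (Fin n) (PolyFun n)} (h : trace P = 0) :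
    tracelessPart P = P := by
  simp [tracelessPart, h]

theorem trace_Amat (hn : n ≠ 0) : trace (Amat n) = 0 := trace_tracelessPart hn _

theorem trace_Bmat (hn : n ≠ 0) : trace (Bmat n) = 0 := trace_tracelessPart hn _

theorem trAB_zero_right (p : ℕ) : trAB n p 0 = trace (Amat n ^ p) := by simp [trAB]

theorem trAB_zero_left (q : ℕ) : trAB n 0 q = trace (Bmat n ^ q) := by simp [trAB]

section Derivation

variable (d : Derivation ℂ (PolyFun n) (PolyFun n))

theorem Derivation.matrix_map_mul (P Q : Matrix (Fin n) (Fin n) (PolyFun n)) :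
    (P * Q).map d = P.map d * Q + P * Q.map d := by
  ext i j : 2
  simp only [map_apply, mul_apply, Matrix.add_apply, map_sum, Derivation.leibniz, smul_eq_mul,
    Finset.sum_add_distrib]
  rw [add_comm]
  simp only [mul_comm]

theorem Derivation.matrix_map_tracelessPart (P : Matrix (Fin n) (Fin n) (PolyFun n)) :
    (tracelessPart P).map d = tracelessPart (P.map d) := by
  ext i j
  have h : d (trace P) = trace (P.map d) := AddMonoidHom.map_trace d P
  by_cases hij : i = j <;>
    simp [tracelessPart, hij, Derivation.leibniz, h, one_apply]

theorem Derivation.matrix_map_pow (P : Matrix (Fin n) (Fin n) (PolyFun n)) (q : ℕ) :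
    (P ^ q).map d = ∑ j ∈ Finset.range q, P ^ j * P.map d * P ^ (q - 1 - j) := by
  induction q with
  | zero =>
    ext i j : 2
    rw [pow_zero, map_apply, one_apply]
    split_ifs <;> simp
  | succ q ih =>
    rw [pow_succ, Derivation.matrix_map_mul, ih, Finset.sum_range_succ, Finset.sum_mul]
    refine congrArg₂ (· + ·) ?_ ?_
    · refine Finset.sum_congr rfl fun j hj => ?_
      have hj := Finset.mem_range.1 hj
      rw [mul_assoc _ _ P, ← pow_succ, show q - 1 - j + 1 = q + 1 - 1 - j by omega]
    · simp

theorem Derivation.trace_pow (P : Matrix (Fin n) (Fin n) (PolyFun n)) (k : ℕ) :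
    d (trace (P ^ k)) = (k : ℂ) • trace (P ^ (k - 1) * P.map d) := by
  rw [show d (trace (P ^ k)) = trace ((P ^ k).map d) from AddMonoidHom.map_trace d _,
    Derivation.matrix_map_pow, trace_sum, Finset.sum_congr rfl
      (g := fun _ => trace (P ^ (k - 1) * P.map d))]
  · simp [Algebra.smul_def]
  · intro j hj
    have hj := Finset.mem_range.1 hj
    rw [trace_mul_cycle, ← pow_add]
    congr 3
    omega

theorem Derivation.trAB_of_map_Amat_eq_zero (h : (Amat n).map d = 0) (p q : ℕ) :
    d (trAB n p q) = ∑ j ∈ Finset.range q,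
      trace (Amat n ^ p * (Bmat n ^ j * (Bmat n).map d * Bmat n ^ (q - 1 - j))) := by
  rw [show d (trAB n p q) = trace ((Amat n ^ p * Bmat n ^ q).map d) from
    AddMonoidHom.map_trace d _, Derivation.matrix_map_mul, Derivation.matrix_map_pow d (Amat n),
    Derivation.matrix_map_pow d (Bmat n), h]
  simp [Finset.mul_sum, trace_sum]

theorem Derivation.trAB_of_map_Bmat_eq_zero (h : (Bmat n).map d = 0) (p q : ℕ) :
    d (trAB n p q) = ∑ j ∈ Finset.range p,
      trace (Amat n ^ j * (Amat n).map d * Amat n ^ (p - 1 - j) * Bmat n ^ q) := by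
  rw [show d (trAB n p q) = trace ((Amat n ^ p * Bmat n ^ q).map d) from
    AddMonoidHom.map_trace d _, Derivation.matrix_map_mul, Derivation.matrix_map_pow d (Amat n),
    Derivation.matrix_map_pow d (Bmat n), h]
  simp [Finset.sum_mul, trace_sum]

end Derivation

/-- The derivation with `X ↦ U` and `Y ↦ V`. -/
noncomputable def matrixDeriv (U V : Matrix (Fin n) (Fin n) (PolyFun n)) :
    Derivation ℂ (PolyFun n) (PolyFun n) :=
  mkDerivation ℂ (Sum.elim (fun p => U p.1 p.2) (fun p => V p.1 p.2))

theorem Xmat_map_matrixDeriv (U V : Matrix (Fin n) (Fin n) (PolyFun n)) :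
    (Xmat n).map (matrixDeriv U V) = U := by
  ext i j : 2
  simp [Xmat, matrixDeriv]

theorem Ymat_map_matrixDeriv (U V : Matrix (Fin n) (Fin n) (PolyFun n)) :
    (Ymat n).map (matrixDeriv U V) = V := by
  ext i j : 2
  simp [Ymat, matrixDeriv]

theorem Amat_map_matrixDeriv (U V : Matrix (Fin n) (Fin n) (PolyFun n)) :
    (Amat n).map (matrixDeriv U V) = tracelessPart U :=
  (Derivation.matrix_map_tracelessPart _ _).trans (by rw [Xmat_map_matrixDeriv])

theorem Bmat_map_matrixDeriv (U V : Matrix (Fin n) (Fin n) (PolyFun n)) :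
    (Bmat n).map (matrixDeriv U V) = tracelessPart V :=
  (Derivation.matrix_map_tracelessPart _ _).trans (by rw [Ymat_map_matrixDeriv])

theorem pbracket_eq_matrixDeriv (F G : PolyFun n) :
    pbracket F G = matrixDeriv (fun j k => pderiv (Sum.inr (k, j)) G)
      (fun j k => -pderiv (Sum.inl (k, j)) G) F := by
  let δ : Derivation ℂ (PolyFun n) (PolyFun n) := ∑ j : Fin n, ∑ k : Fin n,
    (pderiv (Sum.inr (k, j)) G • pderiv (Sum.inl (j, k))
      - pderiv (Sum.inl (k, j)) G • pderiv (Sum.inr (j, k)))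
  have hδ : ∀ F, pbracket F G = δ F := by
    intro F
    have hsum (f : Fin n → Derivation ℂ (PolyFun n) (PolyFun n)) :
        (∑ j, f j) F = ∑ j, f j F := by
      have := congrFun (map_sum (Derivation.coeFnAddMonoidHom (R := ℂ) (A := PolyFun n)
        (M := PolyFun n)) f Finset.univ) F
      rwa [Finset.sum_apply] at this
    simp only [pbracket, δ, hsum, Derivation.sub_apply, Derivation.smul_apply, smul_eq_mul]
    refine Finset.sum_congr rfl fun _ _ => Finset.sum_congr rfl fun _ _ => ?_
    ring
  rw [hδ]
  congr 1
  refine derivation_ext fun i => ?_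
  rw [← hδ]
  rcases i with ⟨a, b⟩ | ⟨a, b⟩
  · rw [pbracket, Finset.sum_eq_single a, Finset.sum_eq_single b]
    · simp [matrixDeriv]
    · intro k _ hk; simp [hk.symm]
    · simp
    · intro j _ hj; simp [hj.symm]
    · simp
  · rw [pbracket, Finset.sum_eq_single a, Finset.sum_eq_single b]
    · simp [matrixDeriv]
    · intro k _ hk; simp [hk.symm]
    · simp
    · intro j _ hj; simp [hj.symm]
    · simp

theorem matrixDeriv_smul (c : ℂ) (U V : Matrix (Fin n) (Fin n) (PolyFun n)) :
    matrixDeriv (c • U) (c • V) = c • matrixDeriv U V := by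
  refine derivation_ext fun i => ?_
  rcases i with i | i <;> simp [matrixDeriv]

theorem trace_mul_tracelessPart_single (P : Matrix (Fin n) (Fin n) (PolyFun n)) (j k : Fin n) :
    trace (P * tracelessPart (single k j 1)) = tracelessPart P j k := by
  rcases eq_or_ne j k with rfl | h
  · simp [tracelessPart, mul_sub, trace_mul_single, mul_comm]
  · simp [tracelessPart, trace_mul_single, trace_single_eq_of_ne, h, h.symm]

theorem pbracket_trAB_zero_right (F : PolyFun n) (k : ℕ) :
    pbracket F (trAB n k 0) =
      -(k : ℂ) • matrixDeriv 0 (tracelessPart (Amat n ^ (k - 1))) F := by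
  have hX (i j : Fin n) : (Amat n).map (pderiv (Sum.inl (i, j))) = tracelessPart (single i j 1) :=
    (Derivation.matrix_map_tracelessPart _ _).trans (by
      congr 1; ext a b : 2
      simp only [Xmat, map_apply, single_apply, pderiv_X]
      by_cases hia : i = a <;> by_cases hjb : j = b <;> simp [hia, hjb, eq_comm])
  have hY (i j : Fin n) : (Amat n).map (pderiv (Sum.inr (i, j))) = 0 :=
    (Derivation.matrix_map_tracelessPart _ _).trans (by
      rw [show (Xmat n).map (pderiv (Sum.inr (i, j))) = 0 by
        ext a b : 2
        simp [Xmat, pderiv_X]]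
      simp [tracelessPart])
  rw [pbracket_eq_matrixDeriv, ← Derivation.smul_apply, ← matrixDeriv_smul, trAB_zero_right]
  congr 2
  · ext i j : 2
    rw [Derivation.trace_pow, hY]
    simp
  · ext i j : 2
    rw [Derivation.trace_pow, hX, trace_mul_tracelessPart_single]
    simp

theorem pbracket_trAB_zero_left (F : PolyFun n) (k : ℕ) :
    pbracket F (trAB n 0 k) =
      (k : ℂ) • matrixDeriv (tracelessPart (Bmat n ^ (k - 1))) 0 F := by
  have hY (i j : Fin n) : (Bmat n).map (pderiv (Sum.inr (i, j))) = tracelessPart (single i j 1) :=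
    (Derivation.matrix_map_tracelessPart _ _).trans (by
      congr 1; ext a b : 2
      simp only [Ymat, map_apply, single_apply, pderiv_X]
      by_cases hia : i = a <;> by_cases hjb : j = b <;> simp [hia, hjb, eq_comm])
  have hX (i j : Fin n) : (Bmat n).map (pderiv (Sum.inl (i, j))) = 0 :=
    (Derivation.matrix_map_tracelessPart _ _).trans (by
      rw [show (Ymat n).map (pderiv (Sum.inl (i, j))) = 0 by
        ext a b : 2
        simp [Ymat, pderiv_X]]
      simp [tracelessPart])
  rw [pbracket_eq_matrixDeriv, ← Derivation.smul_apply, ← matrixDeriv_smul, trAB_zero_left]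
  congr 2
  · ext i j : 2
    rw [Derivation.trace_pow, hY, trace_mul_tracelessPart_single]
    simp
  · ext i j : 2
    rw [Derivation.trace_pow, hX]
    simp

end Bracket

theorem Matrix.exists_eq_vecMulVec_of_rank_eq_one {ι 𝕜 : Type*} [Fintype ι] [DecidableEq ι]
    [Field 𝕜] {M : Matrix ι ι 𝕜} (h : M.rank = 1) : ∃ v w : ι → 𝕜, M = vecMulVec v w := by
  obtain ⟨⟨v, _⟩, _, hv⟩ := finrank_eq_one_iff'.1 (show Module.finrank 𝕜 _ = 1 from h)
  choose c hc using fun j => hv ⟨M.mulVecLin (Pi.single j 1), LinearMap.mem_range_self _ _⟩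
  refine ⟨v, c, ?_⟩
  ext a b
  have := congrFun (congrArg Subtype.val (hc b)) a
  simp only [mulVecLin_apply, mulVec_single_one, col_apply, SetLike.val_smul, Pi.smul_apply,
    smul_eq_mul] at this
  rw [vecMulVec_apply, mul_comm, this]

theorem Matrix.trace_mul_trace_of_rank_eq_one {ι 𝕜 : Type*} [Fintype ι] [DecidableEq ι]
    [Field 𝕜] {M : Matrix ι ι 𝕜} (h : M.rank = 1) (U V : Matrix ι ι 𝕜) :
    trace (U * M) * trace (V * M) = trace (U * M * V * M) := by
  obtain ⟨v, w, rfl⟩ := exists_eq_vecMulVec_of_rank_eq_one h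
  rw [mul_assoc (U * _), mul_vecMulVec, mul_vecMulVec, vecMulVec_mul_vecMulVec, trace_vecMulVec,
    trace_vecMulVec, trace_vecMulVec, dotProduct_smul, smul_eq_mul, dotProduct_comm w, mul_comm]

section Restriction

variable {n : ℕ}

/-- Restriction of polynomial functions to `Ŝ_n`. -/
noncomputable def restrictShat (n : ℕ) : PolyFun n →ₐ[ℂ] (Shat n → ℂ) :=
  AlgHom.pi fun P : Shat n =>
    aeval (Sum.elim (fun p => P.1.1 p.1 p.2) (fun p => P.1.2 p.1 p.2))

theorem restrictShat_apply (F : PolyFun n) (P : Shat n) :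
    restrictShat n F P = evalP P.1.1 P.1.2 F := rfl

theorem evalP_Amat {X Y : Matrix (Fin n) (Fin n) ℂ} (h : trace X = 0) :
    (Amat n).map (evalP X Y) = X := by
  ext i j : 2
  have ht : evalP X Y (trace (Xmat n)) = 0 := by
    rw [← h]
    simp [evalP, trace, Xmat]
  have hX : evalP X Y (Xmat n i j) = X i j := by simp [evalP, Xmat]
  rw [map_apply]
  simp only [evalP] at ht hX ⊢
  simp [Amat, ht, hX]

theorem evalP_Bmat {X Y : Matrix (Fin n) (Fin n) ℂ} (h : trace Y = 0) :
    (Bmat n).map (evalP X Y) = Y := by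
  ext i j : 2
  have ht : evalP X Y (trace (Ymat n)) = 0 := by
    rw [← h]
    simp [evalP, trace, Ymat]
  have hY : evalP X Y (Ymat n i j) = Y i j := by simp [evalP, Ymat]
  rw [map_apply]
  simp only [evalP] at ht hY ⊢
  simp [Bmat, ht, hY]

theorem restrictShat_matrixDeriv_eq_zero {U V : Matrix (Fin n) (Fin n) (PolyFun n)}
    (hline : ∀ P ∈ Shat n, ∀ t : ℂ,
      (P.1 + t • U.map (evalP P.1 P.2), P.2 + t • V.map (evalP P.1 P.2)) ∈ Shat n)
    {f : PolyFun n} (hf : restrictShat n f = 0) : restrictShat n (matrixDeriv U V f) = 0 := by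
  funext P
  obtain ⟨⟨X, Y⟩, hP⟩ := P
  rw [restrictShat_apply]
  simp only [Pi.zero_apply]
  let γ : PolyFun n →ₐ[ℂ] Polynomial ℂ := aeval (Sum.elim
    (fun p => Polynomial.C (X p.1 p.2) + Polynomial.X * Polynomial.C (evalP X Y (U p.1 p.2)))
    (fun p => Polynomial.C (Y p.1 p.2) + Polynomial.X * Polynomial.C (evalP X Y (V p.1 p.2))))
  have hγ (t : ℂ) (F : PolyFun n) : (γ F).eval t =
      evalP (X + t • U.map (evalP X Y)) (Y + t • V.map (evalP X Y)) F := by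
    induction F using MvPolynomial.induction_on with
    | C a => simp [γ, evalP]
    | add F G hF hG =>
      simp only [evalP] at hF hG ⊢
      rw [map_add, map_add, Polynomial.eval_add, hF, hG]
    | mul_X F i hF =>
      simp only [evalP] at hF ⊢
      rw [map_mul, map_mul, Polynomial.eval_mul, hF]
      rcases i with i | i <;> simp [γ, evalP, mul_comm t]
  have hd (F : PolyFun n) : (γ F).derivative.eval 0 = evalP X Y (matrixDeriv U V F) := by
    induction F using MvPolynomial.induction_on with
    | C a => simp [γ, evalP]
    | add F G hF hG =>
      simp only [evalP] at hF hG ⊢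
      rw [map_add, map_add, map_add, map_add, Polynomial.eval_add, hF, hG]
    | mul_X F i hF =>
      have h0 := hγ 0 F
      simp only [zero_smul, add_zero] at h0
      rw [map_mul, Polynomial.derivative_mul, Polynomial.eval_add, Polynomial.eval_mul,
        Polynomial.eval_mul, hF, h0, Derivation.leibniz]
      simp only [evalP]
      rcases i with i | i <;> simp [γ, evalP, matrixDeriv] <;> ring
  have hzero : γ f = 0 := by
    refine Polynomial.funext fun t => ?_
    rw [hγ, Polynomial.eval_zero]
    exact congrFun hf ⟨_, hline _ hP t⟩
  rw [← hd, hzero]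
  simp

theorem evalP_tracelessPart (X Y : Matrix (Fin n) (Fin n) ℂ)
    (P : Matrix (Fin n) (Fin n) (PolyFun n)) :
    (tracelessPart P).map (evalP X Y) =
      P.map (evalP X Y) - ((n : ℂ)⁻¹ * trace (P.map (evalP X Y))) • 1 := by
  have h : evalP X Y (trace P) = trace (P.map (evalP X Y)) := by
    simp [evalP, trace]
  ext i j : 2
  rw [map_apply, Matrix.sub_apply, map_apply, ← h]
  simp only [evalP]
  by_cases hij : i = j <;> simp [tracelessPart, hij]

theorem evalP_Amat_pow {X Y : Matrix (Fin n) (Fin n) ℂ} (h : trace X = 0) (k : ℕ) :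
    (Amat n ^ k).map (evalP X Y) = X ^ k := by
  conv_rhs => rw [← evalP_Amat (Y := Y) h]
  exact map_pow (eval _ : PolyFun n →+* ℂ).mapMatrix _ _

theorem restrictShat_matrixDeriv_Amat_pow_eq_zero (hn : n ≠ 0) (k : ℕ) {f : PolyFun n}
    (hf : restrictShat n f = 0) :
    restrictShat n (matrixDeriv 0 (tracelessPart (Amat n ^ k)) f) = 0 := by
  refine restrictShat_matrixDeriv_eq_zero ?_ hf
  rintro ⟨X, Y⟩ ⟨hX, hY, hr⟩ t
  simp only at hX hY hr
  have h0 : (0 : Matrix (Fin n) (Fin n) (PolyFun n)).map (evalP X Y) = 0 := by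
    ext i j : 2
    simp [evalP]
  have hn' : (n : ℂ) ≠ 0 := by exact_mod_cast hn
  simp only [evalP_tracelessPart, evalP_Amat_pow hX, h0, smul_zero, add_zero]
  refine ⟨hX, ?_, ?_⟩
  · simp only [trace_add, hY, trace_smul, trace_sub, trace_one, Fintype.card_fin, smul_eq_mul]
    field_simp
    ring
  · rw [← hr]
    congr 2
    simp only [mul_add, add_mul, mul_smul_comm, smul_mul_assoc, mul_sub, sub_mul, mul_one, one_mul,
      ← pow_succ, ← pow_succ']
    abel

theorem restrictShat_matrixDeriv_Bmat_eq_zero {f : PolyFun n}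
    (hf : restrictShat n f = 0) : restrictShat n (matrixDeriv (Bmat n) 0 f) = 0 := by
  refine restrictShat_matrixDeriv_eq_zero ?_ hf
  rintro ⟨X, Y⟩ ⟨hX, hY, hr⟩ t
  simp only at hX hY hr
  have h0 : (0 : Matrix (Fin n) (Fin n) (PolyFun n)).map (evalP X Y) = 0 := by
    ext i j : 2
    simp [evalP]
  simp only [evalP_Bmat hY, h0, smul_zero, add_zero]
  refine ⟨by simp [hX, hY], hY, ?_⟩
  rw [← hr]
  congr 2
  simp only [mul_add, add_mul, mul_smul_comm, smul_mul_assoc]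
  abel

/-- The matrix of restrictions to `Ŝ_n` of the entries of `A`. -/
noncomputable def AmatShat (n : ℕ) : Matrix (Fin n) (Fin n) (Shat n → ℂ) :=
  (restrictShat n).mapMatrix (Amat n)

/-- The matrix of restrictions to `Ŝ_n` of the entries of `B`. -/
noncomputable def BmatShat (n : ℕ) : Matrix (Fin n) (Fin n) (Shat n → ℂ) :=
  (restrictShat n).mapMatrix (Bmat n)

theorem restrictShat_trace_matrixWord (w : List Bool) :
    restrictShat n (trace (matrixWord (Amat n) (Bmat n) w)) =
      trace (matrixWord (AmatShat n) (BmatShat n) w) := by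
  have : (restrictShat n).mapMatrix (matrixWord (Amat n) (Bmat n) w) =
      matrixWord (AmatShat n) (BmatShat n) w := by
    rw [matrixWord, map_list_prod, List.map_map]
    congr 2
    funext b
    cases b <;> rfl
  rw [← this]
  exact AddMonoidHom.map_trace _ _

theorem restrictShat_trAB (p q : ℕ) :
    restrictShat n (trAB n p q) = trace (AmatShat n ^ p * BmatShat n ^ q) := by
  have := restrictShat_trace_matrixWord (n := n) (List.replicate p true ++ List.replicate q false)
  simpa only [trAB, matrixWord_append, matrixWord_replicate_true,
    matrixWord_replicate_false] using this

theorem restrictShat_trace_matrixWord_sub_mem {w w' : List Bool} (h : w.Perm w') :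
    restrictShat n (trace (matrixWord (Amat n) (Bmat n) w)) -
      restrictShat n (trace (matrixWord (Amat n) (Bmat n) w')) ∈
        traceSpan (AmatShat n) (BmatShat n) (w.length - 4) := by
  rw [restrictShat_trace_matrixWord, restrictShat_trace_matrixWord]
  refine trace_matrixWord_sub_mem (M := AmatShat n * BmatShat n - BmatShat n * AmatShat n -
    Complex.I • (1 : Matrix (Fin n) (Fin n) (Shat n → ℂ))) (by abel) (fun U V => ?_) h
  funext P
  obtain ⟨hX, hY, hr⟩ := P.2
  let ε : (Shat n → ℂ) →ₐ[ℂ] ℂ := Pi.evalAlgHom ℂ _ P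
  have htr (Z : Matrix (Fin n) (Fin n) (Shat n → ℂ)) : trace Z P = trace (ε.mapMatrix Z) :=
    AddMonoidHom.map_trace ε Z
  have hA : ε.mapMatrix (AmatShat n) = P.1.1 := evalP_Amat hX
  have hB : ε.mapMatrix (BmatShat n) = P.1.2 := evalP_Bmat hY
  rw [Pi.mul_apply]
  simp only [htr, map_mul, map_sub, map_smul, map_one, hA, hB]
  exact trace_mul_trace_of_rank_eq_one hr _ _

end Restriction

section LieAlgebra

variable {n : ℕ}

/-- The Lie algebra generated by `ℱ`, as a linear subspace. -/
def lieSubspace (n : ℕ) : Submodule ℂ (PolyFun n) where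
  carrier := {f | LieGen n (calF n) f}
  add_mem' := LieGen.add
  zero_mem' := LieGen.zero
  smul_mem' := LieGen.smul

theorem matrixDeriv_Bmat_mem_lieSubspace (hn : n ≠ 0) {f : PolyFun n} (hf : f ∈ lieSubspace n) :
    matrixDeriv (Bmat n) 0 f ∈ lieSubspace n := by
  have h : pbracket f (trAB n 0 2) ∈ lieSubspace n :=
    LieGen.bracket hf (LieGen.base (by simp [calF]))
  rw [pbracket_trAB_zero_left, pow_one, tracelessPart_eq_self (trace_Bmat hn)] at h
  exact (Submodule.smul_mem_iff _ (by norm_num)).1 h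

theorem matrixDeriv_Amat_pow_mem_lieSubspace {k : ℕ} (hk : trAB n (k + 1) 0 ∈ lieSubspace n)
    {f : PolyFun n} (hf : f ∈ lieSubspace n) :
    matrixDeriv 0 (tracelessPart (Amat n ^ k)) f ∈ lieSubspace n := by
  have h : pbracket f (trAB n (k + 1) 0) ∈ lieSubspace n := LieGen.bracket hf hk
  rw [pbracket_trAB_zero_right, Nat.add_sub_cancel] at h
  exact (Submodule.smul_mem_iff _ (neg_ne_zero.2 (by exact_mod_cast k.succ_ne_zero))).1 h

theorem matrixDeriv_Bmat_trAB (hn : n ≠ 0) (p q : ℕ) :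
    matrixDeriv (Bmat n) 0 (trAB n p q) = ∑ j ∈ Finset.range p,
      trace (Amat n ^ j * Bmat n * Amat n ^ (p - 1 - j) * Bmat n ^ q) := by
  rw [Derivation.trAB_of_map_Bmat_eq_zero, Amat_map_matrixDeriv,
    tracelessPart_eq_self (trace_Bmat hn)]
  rw [Bmat_map_matrixDeriv, tracelessPart_eq_self (trace_zero _ _)]

theorem matrixDeriv_Amat_pow_trAB (hn : n ≠ 0) (k p q : ℕ) :
    matrixDeriv 0 (tracelessPart (Amat n ^ k)) (trAB n p q) = ∑ j ∈ Finset.range q,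
      trace (Amat n ^ p * (Bmat n ^ j * tracelessPart (Amat n ^ k) * Bmat n ^ (q - 1 - j))) := by
  rw [Derivation.trAB_of_map_Amat_eq_zero, Bmat_map_matrixDeriv,
    tracelessPart_eq_self (trace_tracelessPart hn _)]
  rw [Amat_map_matrixDeriv, tracelessPart_eq_self (trace_zero _ _)]

theorem matrixDeriv_Bmat_trAB_zero_right (hn : n ≠ 0) (p : ℕ) :
    matrixDeriv (Bmat n) 0 (trAB n (p + 1) 0) = ((p : ℂ) + 1) • trAB n p 1 := by
  rw [matrixDeriv_Bmat_trAB hn, Finset.sum_congr rfl (g := fun _ => trAB n p 1)]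
  · simp [Algebra.smul_def]
  · intro j hj
    have hj := Finset.mem_range.1 hj
    rw [pow_zero, mul_one, trace_mul_comm, ← mul_assoc, ← pow_add, trAB, pow_one,
      show p + 1 - 1 - j + j = p by omega]

theorem matrixDeriv_Amat_pow_trAB_zero_left (hn : n ≠ 0) (k q : ℕ) :
    matrixDeriv 0 (tracelessPart (Amat n ^ k)) (trAB n 0 (q + 1)) =
      ((q : ℂ) + 1) • (trAB n k q - C ((n : ℂ)⁻¹) * trAB n k 0 * trAB n 0 q) := by
  rw [matrixDeriv_Amat_pow_trAB hn, Finset.sum_congr rfl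
    (g := fun _ => trAB n k q - C ((n : ℂ)⁻¹) * trAB n k 0 * trAB n 0 q)]
  · simp [Algebra.smul_def, mul_sub]
  · intro j hj
    have hj := Finset.mem_range.1 hj
    rw [pow_zero, one_mul, trace_mul_cycle, ← pow_add, show q + 1 - 1 - j + j = q by omega,
      trace_mul_comm, tracelessPart, sub_mul, trace_sub, smul_mul_assoc, one_mul, trace_smul,
      trAB_zero_right, trAB_zero_left, trAB, smul_eq_mul]

theorem matrixDeriv_Amat_pow_trAB_one (hn : n ≠ 0) (k p : ℕ) :
    matrixDeriv 0 (tracelessPart (Amat n ^ k)) (trAB n p 1) =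
      trAB n (p + k) 0 - C ((n : ℂ)⁻¹) * trAB n k 0 * trAB n p 0 := by
  rw [matrixDeriv_Amat_pow_trAB hn, Finset.sum_range_one, pow_zero, one_mul,
    mul_one, tracelessPart, mul_sub, trace_sub, mul_smul_comm, mul_one,
    trace_smul, ← pow_add, smul_eq_mul]
  simp only [trAB_zero_right]

theorem trAB_one_zero (hn : n ≠ 0) : trAB n 1 0 = 0 := by
  rw [trAB_zero_right, pow_one, trace_Amat hn]

theorem trAB_zero_one (hn : n ≠ 0) : trAB n 0 1 = 0 := by
  rw [trAB_zero_left, pow_one, trace_Bmat hn]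

theorem trAB_zero_right_mem_lieSubspace (hn : n ≠ 0) {k : ℕ} (hk : 2 ≤ k) :
    trAB n k 0 ∈ lieSubspace n := by
  have h2 : trAB n 2 0 ∈ lieSubspace n := LieGen.base (by simp [calF])
  have h3 : trAB n 3 0 ∈ lieSubspace n := LieGen.base (by simp [calF])
  have h11 : trAB n 1 1 ^ 2 ∈ lieSubspace n := LieGen.base (by simp [calF])
  have hone (p : ℕ) : matrixDeriv 0 (tracelessPart (Amat n ^ 1)) (trAB n p 1) =
      trAB n (p + 1) 0 := by
    rw [matrixDeriv_Amat_pow_trAB_one hn, trAB_one_zero hn]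
    simp
  have hzero (p : ℕ) : matrixDeriv 0 (tracelessPart (Amat n ^ 1)) (trAB n p 0) = 0 := by
    rw [matrixDeriv_Amat_pow_trAB hn]
    simp
  have h22 : trAB n 2 0 ^ 2 ∈ lieSubspace n := by
    have h := matrixDeriv_Amat_pow_mem_lieSubspace h2 (matrixDeriv_Amat_pow_mem_lieSubspace h2 h11)
    simp only [pow_two, Derivation.leibniz, smul_eq_mul, map_add, hone, hzero] at h
    refine (Submodule.smul_mem_iff _ (two_ne_zero (α := ℂ))).1 ?_
    convert h using 1
    rw [two_smul]
    ring
  have hmul {f : PolyFun n} (hf : f ∈ lieSubspace n) :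
      trAB n 2 0 * matrixDeriv 0 (tracelessPart (Amat n ^ 1)) f ∈ lieSubspace n := by
    have h : pbracket f (trAB n 2 0 ^ 2) ∈ lieSubspace n := LieGen.bracket hf h22
    have hb : pbracket f (trAB n 2 0 ^ 2) = (2 : ℂ) • (trAB n 2 0 * pbracket f (trAB n 2 0)) := by
      simp only [pbracket, pow_two, Derivation.leibniz, smul_eq_mul, Finset.mul_sum,
        Finset.smul_sum, two_smul]
      refine Finset.sum_congr rfl fun _ _ => Finset.sum_congr rfl fun _ _ => ?_
      ring
    rw [hb, pbracket_trAB_zero_right, mul_smul_comm, smul_smul] at h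
    exact (Submodule.smul_mem_iff _ (by norm_num)).1 h
  have hlower {k : ℕ} (hk : trAB n (k + 1) 0 ∈ lieSubspace n) : trAB n k 1 ∈ lieSubspace n := by
    have h := matrixDeriv_Bmat_mem_lieSubspace hn hk
    rw [matrixDeriv_Bmat_trAB_zero_right hn] at h
    exact (Submodule.smul_mem_iff _ (by exact_mod_cast k.succ_ne_zero)).1 h
  induction k using Nat.strong_induction_on with
  | _ k ih =>
  obtain rfl | rfl | hk4 : k = 2 ∨ k = 3 ∨ 4 ≤ k := by omega
  · exact h2
  · exact h3
  obtain ⟨l, rfl⟩ := Nat.exists_eq_add_of_le' hk4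
  have h := matrixDeriv_Amat_pow_mem_lieSubspace h3
    (hlower (ih (l + 2 + 1) (by omega) (by omega)))
  rw [matrixDeriv_Amat_pow_trAB_one hn] at h
  have h' := hmul (hlower (ih (l + 1 + 1) (by omega) (by omega)))
  rw [hone] at h'
  have := add_mem h (Submodule.smul_mem _ ((n : ℂ)⁻¹) h')
  rw [← C_mul', mul_assoc, sub_add_cancel] at this
  exact this

end LieAlgebra

section Restriction

variable {n : ℕ}

/-- The restrictions to `Ŝ_n` of the elements of the Lie algebra generated by `ℱ`. -/
noncomputable def restrictLie (n : ℕ) : Submodule ℂ (Shat n → ℂ) :=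
  (lieSubspace n).map (restrictShat n).toLinearMap

theorem restrictShat_mem_restrictLie {f : PolyFun n} (hf : f ∈ lieSubspace n) :
    restrictShat n f ∈ restrictLie n :=
  Submodule.mem_map_of_mem (f := (restrictShat n).toLinearMap) hf

theorem restrictShat_map_mem_restrictLie {d : Derivation ℂ (PolyFun n) (PolyFun n)}
    (hd : ∀ f ∈ lieSubspace n, d f ∈ lieSubspace n)
    (hd' : ∀ f, restrictShat n f = 0 → restrictShat n (d f) = 0) {f : PolyFun n}
    (hf : restrictShat n f ∈ restrictLie n) : restrictShat n (d f) ∈ restrictLie n := by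
  obtain ⟨g, hg, hgf⟩ := hf
  have hgf : restrictShat n g = restrictShat n f := hgf
  have h := hd' (f - g) (by rw [map_sub, hgf, sub_self])
  rw [map_sub, map_sub, sub_eq_zero] at h
  rw [h]
  exact restrictShat_mem_restrictLie (hd g hg)

theorem matrixDeriv_Bmat_mem_restrictLie (hn : n ≠ 0) {f : PolyFun n}
    (hf : restrictShat n f ∈ restrictLie n) :
    restrictShat n (matrixDeriv (Bmat n) 0 f) ∈ restrictLie n :=
  restrictShat_map_mem_restrictLie (fun _ => matrixDeriv_Bmat_mem_lieSubspace hn)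
    (fun _ => restrictShat_matrixDeriv_Bmat_eq_zero) hf

theorem matrixDeriv_Amat_pow_mem_restrictLie (hn : n ≠ 0) {k : ℕ} (hk : 1 ≤ k) {f : PolyFun n}
    (hf : restrictShat n f ∈ restrictLie n) :
    restrictShat n (matrixDeriv 0 (tracelessPart (Amat n ^ k)) f) ∈ restrictLie n :=
  restrictShat_map_mem_restrictLie
    (fun _ => matrixDeriv_Amat_pow_mem_lieSubspace
      (trAB_zero_right_mem_lieSubspace hn (by omega)))
    (fun _ => restrictShat_matrixDeriv_Amat_pow_eq_zero hn k) hf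

theorem restrictShat_matrixDeriv_Bmat_trAB_sub_mem (hn : n ≠ 0) (p q : ℕ) :
    restrictShat n (matrixDeriv (Bmat n) 0 (trAB n (p + 1) q)) -
      ((p : ℂ) + 1) • restrictShat n (trAB n p (q + 1)) ∈
        traceSpan (AmatShat n) (BmatShat n) ((p : ℤ) + q - 3) := by
  have hsum : ((p : ℂ) + 1) • restrictShat n (trAB n p (q + 1)) =
      ∑ j ∈ Finset.range (p + 1), restrictShat n (trAB n p (q + 1)) := by
    simp [Algebra.smul_def]
  rw [hsum, matrixDeriv_Bmat_trAB hn, map_sum, ← Finset.sum_sub_distrib]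
  refine Submodule.sum_mem _ fun j hj => ?_
  have hj := Finset.mem_range.1 hj
  have h := restrictShat_trace_matrixWord_sub_mem (n := n)
    (w := List.replicate j true ++ (false :: (List.replicate (p - j) true ++
      List.replicate q false)))
    (w' := List.replicate p true ++ List.replicate (q + 1) false) (by
      rw [List.perm_iff_count]
      rintro (_ | _) <;> simp [List.count_replicate]; omega)
  simp only [matrixWord_append, matrixWord_cons, matrixWord_replicate_true,
    matrixWord_replicate_false, cond_false, ← mul_assoc] at h
  rw [trAB, Nat.add_sub_cancel]
  exact traceSpan_mono (by simp; omega) h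

theorem restrictShat_matrixDeriv_Amat_trAB_sub_mem (hn : n ≠ 0) (p q : ℕ) :
    restrictShat n (matrixDeriv 0 (tracelessPart (Amat n ^ 1)) (trAB n p (q + 1))) -
      ((q : ℂ) + 1) • restrictShat n (trAB n (p + 1) q) ∈
        traceSpan (AmatShat n) (BmatShat n) ((p : ℤ) + q - 3) := by
  have hsum : ((q : ℂ) + 1) • restrictShat n (trAB n (p + 1) q) =
      ∑ j ∈ Finset.range (q + 1), restrictShat n (trAB n (p + 1) q) := by
    simp [Algebra.smul_def]
  rw [hsum, matrixDeriv_Amat_pow_trAB hn, map_sum, ← Finset.sum_sub_distrib]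
  refine Submodule.sum_mem _ fun j hj => ?_
  have hj := Finset.mem_range.1 hj
  have h := restrictShat_trace_matrixWord_sub_mem (n := n)
    (w := List.replicate p true ++ (List.replicate j false ++ ([true] ++
      List.replicate (q - j) false)))
    (w' := List.replicate (p + 1) true ++ List.replicate q false) (by
      rw [List.perm_iff_count]
      rintro (_ | _) <;> simp [List.count_replicate]; omega)
  simp only [matrixWord_append, matrixWord_replicate_true, matrixWord_replicate_false,
    show matrixWord (Amat n) (Bmat n) [true] = Amat n by simp [matrixWord]] at h
  rw [trAB, Nat.add_sub_cancel, pow_one, tracelessPart_eq_self (trace_Amat hn), mul_assoc (_ ^ j)]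
  exact traceSpan_mono (by simp; omega) h

theorem traceSpan_le_restrictLie (hn : n ≠ 0) {D : ℕ}
    (H : ∀ m : ℕ, 1 ≤ m → ∀ p q : ℕ → ℕ,
      (∑ k ∈ Finset.range m, (p k + q k)) ≤ D →
      ∃ g : PolyFun n, LieGen n (calF n) g ∧
        ∀ P ∈ Shat n,
          evalP P.1 P.2 (∏ k ∈ Finset.range m, trAB n (p k) (q k)) = evalP P.1 P.2 g) :
    traceSpan (AmatShat n) (BmatShat n) D ≤ restrictLie n := by
  refine Submodule.span_le.2 ?_
  rintro _ ⟨l, hl, rfl⟩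
  let l' := (0, 0) :: l
  have hsum : ∑ k ∈ Finset.range l'.length, ((l'.getD k 0).1 + (l'.getD k 0).2) =
      (l.map fun x => x.1 + x.2).sum := by
    change ∑ k ∈ Finset.range (l.length + 1), _ = _
    rw [Finset.sum_range_succ', Finset.sum_range, ← Fin.sum_univ_fun_getElem l]
    simp [l']
  have hprod : ∏ k ∈ Finset.range l'.length, trAB n (l'.getD k 0).1 (l'.getD k 0).2 =
      (n : ℂ) • (l.map fun x => trAB n x.1 x.2).prod := by
    change ∏ k ∈ Finset.range (l.length + 1), _ = _
    rw [Finset.prod_range_succ', Finset.prod_range, ← Fin.prod_univ_fun_getElem l]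
    simp [l', trAB, Algebra.smul_def, mul_comm]
  obtain ⟨g, hg, hgl⟩ := H l'.length (by simp [l']) _ _ (by rw [hsum]; exact_mod_cast hl)
  rw [hprod] at hgl
  have hr : restrictShat n ((n : ℂ) • (l.map fun x => trAB n x.1 x.2).prod) =
      restrictShat n g := funext fun P => hgl P.1 P.2
  rw [map_smul, map_list_prod, List.map_map] at hr
  have hn' : (n : ℂ) ≠ 0 := by exact_mod_cast hn
  refine (Submodule.smul_mem_iff _ hn').1 ?_
  have hcomp : (fun x : ℕ × ℕ => trace (AmatShat n ^ x.1 * BmatShat n ^ x.2)) =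
      restrictShat n ∘ fun x => trAB n x.1 x.2 := funext fun x => (restrictShat_trAB _ _).symm
  rw [hcomp, hr]
  exact restrictShat_mem_restrictLie hg

theorem prod_trAB_mem_traceSpan (i : ℕ → ℕ) (m : ℕ) :
    restrictShat n (∏ k ∈ Finset.range m, trAB n (i k) 0) ∈
      traceSpan (AmatShat n) (BmatShat n) (∑ k ∈ Finset.range m, i k : ℕ) := by
  induction m with
  | zero => exact Submodule.subset_span ⟨[], by simp, by simp⟩
  | succ m ih =>
    rw [Finset.prod_range_succ, Finset.sum_range_succ, map_mul, Nat.cast_add, restrictShat_trAB]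
    exact mul_mem_traceSpan ih (trace_pow_mul_pow_mem_traceSpan (by simp))

theorem matrixDeriv_mul_prod_trAB (V : Matrix (Fin n) (Fin n) (PolyFun n)) (f : PolyFun n)
    (i : ℕ → ℕ) (m : ℕ) :
    matrixDeriv 0 V (f * ∏ k ∈ Finset.range m, trAB n (i k) 0) =
      matrixDeriv 0 V f * ∏ k ∈ Finset.range m, trAB n (i k) 0 := by
  have htr (k : ℕ) : matrixDeriv 0 V (trAB n k 0) = 0 := by
    rw [Derivation.trAB_of_map_Amat_eq_zero, Finset.range_zero, Finset.sum_empty]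
    rw [Amat_map_matrixDeriv, tracelessPart_eq_self (trace_zero _ _)]
  have hprod : matrixDeriv 0 V (∏ k ∈ Finset.range m, trAB n (i k) 0) = 0 := by
    induction m with
    | zero => simp
    | succ m ih => rw [Finset.prod_range_succ, Derivation.leibniz, ih, htr, smul_zero, smul_zero,
        add_zero]
  rw [Derivation.leibniz, hprod, smul_zero, zero_add, smul_eq_mul, mul_comm]

theorem trAB_mul_prod_mem_restrictLie (hn : n ≠ 0) {D : ℕ}
    (H : traceSpan (AmatShat n) (BmatShat n) D ≤ restrictLie n) (i : ℕ → ℕ) (m : ℕ)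
    (hi : ∀ k < m, 2 ≤ i k) (p q : ℕ) (hdeg : p + q + ∑ k ∈ Finset.range m, i k ≤ D + 4) :
    restrictShat n (trAB n p q * ∏ k ∈ Finset.range m, trAB n (i k) 0) ∈ restrictLie n := by
  induction m generalizing p q with
  | zero =>
    simp only [Finset.range_zero, Finset.sum_empty, Finset.prod_empty, mul_one, add_zero] at hdeg ⊢
    induction q generalizing p with
    | zero =>
      rcases p with _ | _ | p
      · rw [restrictShat_trAB]
        exact H (trace_pow_mul_pow_mem_traceSpan (by simp))
      · simp [trAB_one_zero hn]
      · exact restrictShat_mem_restrictLie (trAB_zero_right_mem_lieSubspace hn (by omega))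
    | succ q ih =>
      have h := sub_mem (matrixDeriv_Bmat_mem_restrictLie hn (ih (p + 1) (by omega)))
        (H (traceSpan_mono (by omega) (restrictShat_matrixDeriv_Bmat_trAB_sub_mem hn p q)))
      rw [sub_sub_cancel] at h
      exact (Submodule.smul_mem_iff _ (by exact_mod_cast p.succ_ne_zero)).1 h
  | succ m ih =>
    have ih := ih fun k hk => hi k (by omega)
    have him := hi m (by omega)
    have hsum := Finset.sum_range_succ i m
    induction p generalizing q with
    | zero =>
      rw [Finset.prod_range_succ]
      rcases q with _ | _ | q
      · have h := Submodule.smul_mem _ (n : ℂ) (ih (i m) 0 (by omega))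
        rw [← map_smul] at h
        convert h using 2
        rw [show trAB n 0 0 = (n : PolyFun n) by simp [trAB], Algebra.smul_def, map_natCast]
        ring
      · simp [trAB_zero_one hn]
      · have h := matrixDeriv_Amat_pow_mem_restrictLie hn (k := i m) (by omega)
          (ih 0 (q + 2 + 1) (by omega))
        rw [matrixDeriv_mul_prod_trAB, matrixDeriv_Amat_pow_trAB_zero_left hn, smul_mul_assoc,
          map_smul] at h
        have h := (Submodule.smul_mem_iff _ (by exact_mod_cast (q + 2).succ_ne_zero)).1 h
        have h' := sub_mem (ih (i m) (q + 2) (by omega)) h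
        rw [← map_sub] at h'
        have hn' : (n : ℂ)⁻¹ ≠ 0 := inv_ne_zero (by exact_mod_cast hn)
        refine (Submodule.smul_mem_iff _ hn').1 ?_
        rw [← map_smul, ← C_mul']
        convert h' using 2
        ring
    | succ p ihp =>
      have h := matrixDeriv_Amat_pow_mem_restrictLie hn le_rfl (ihp (q + 1) (by omega))
      rw [matrixDeriv_mul_prod_trAB, map_mul] at h
      have h' := H (traceSpan_mono (by omega)
        (mul_mem_traceSpan (restrictShat_matrixDeriv_Amat_trAB_sub_mem hn p q)
          (prod_trAB_mem_traceSpan i (m + 1))))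
      have h := sub_mem h h'
      rw [sub_mul, sub_sub_cancel, smul_mul_assoc, ← map_mul] at h
      exact (Submodule.smul_mem_iff _ (by exact_mod_cast q.succ_ne_zero)).1 h

end Restriction

/-- STATEMENT 9 (Lemma on `tr A^p B^q · ∏ tr A^{i_k}`), assuming the induction
hypothesis `H(D)`. -/
theorem stmt_9 (n : ℕ) (hn : 1 ≤ n) (D : ℕ)
    (H : ∀ m : ℕ, 1 ≤ m → ∀ p q : ℕ → ℕ,
      (∑ k ∈ Finset.range m, (p k + q k)) ≤ D →
      ∃ g : PolyFun n, LieGen n (calF n) g ∧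
        ∀ P ∈ Shat n,
          evalP P.1 P.2 (∏ k ∈ Finset.range m, trAB n (p k) (q k)) = evalP P.1 P.2 g)
    (p q m : ℕ) (i : ℕ → ℕ) (hi : ∀ k < m, 2 ≤ i k)
    (hdeg : p + q + (∑ k ∈ Finset.range m, i k) ≤ D + 4) :
    ∃ g : PolyFun n, LieGen n (calF n) g ∧
      ∀ P ∈ Shat n,
        evalP P.1 P.2 (trAB n p q * ∏ k ∈ Finset.range m, trAB n (i k) 0)
          = evalP P.1 P.2 g := by
  have hn0 : n ≠ 0 := by omega
  obtain ⟨g, hg, hgf⟩ :=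
    trAB_mul_prod_mem_restrictLie hn0 (traceSpan_le_restrictLie hn0 H) i m hi p q hdeg
  exact ⟨g, hg, fun P hP => (congrFun hgf ⟨P, hP⟩).symm⟩
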